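/- d ∘ d = 0 and, for every k ≥ 1, the cohomology H^k = ker(d : Ω^k → Ω^{k+1}) / im(d : Ω^{k−1} → Ω^k) of the cobar complex (Ω^•, d) is isomorphic as a K-vector space to the symmetric power Sym^k V. -/

import Mathlib

/-!
The cohomology is computed by an acyclic matching (algebraic discrete Morse theory) on the basis of
`Ω^k` formed by the `k`-tuples of nonempty subsets. Tuples are treated as lists, on which the
differential has the recursion
`(d F)(A, B, L) = [A ∩ B = ∅] ε(A,B) F(A ∪ B, L) - (d F(A, ·))(B, L)` (`cD`, `cobarD_ofFn`); together
with coassociativity (`mc_coassoc`) this gives `d ∘ d = 0` (`cD_cD`).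

A tuple is inspected at the first position whose entry either has at least two elements
(the tuple is then splittable) or is a singleton `{a}` with `a` smaller than the whole next entry
(the tuple is then mergeable). Splitting off the smallest element, respectively merging, is a
bijection between splittable `k`-tuples and mergeable `(k+1)`-tuples (`split_spec`, `fold_spec`).
The remaining tuples, called critical, are the weakly decreasing sequences of singletons. Merging two
disjoint adjacent entries removes exactly the inversions between them, and the matched merge is the
one that removes none; so the part of `d` from splittable to mergeable tuples is triangular with
respect to the number of inversions, with units on the diagonal (`triangular`). Hence it is injective
(`split_injective`) and surjective (`merge_surjective`), and every cocycle is cohomologous to one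
supported on critical tuples.

Symmetrization `symz`, sending `F` to `∑ F({i_1},…,{i_k}) x_{i_1} ⋯ x_{i_k}`, kills coboundaries
because the coproduct of `e_a ∧ e_b` is antisymmetric (`symz_cD`), and it is a bijection from the
cochains supported on critical tuples, all of which are cocycles, onto the homogeneous polynomials
of degree `k` (`coeff_symz`, `exists_critical`). So it induces the isomorphism `H^k ≅ Sym^k V`.
-/

/-!
STATEMENT 4: the cobar complex of the coalgebra `Λ = ⋀^{≥1} V` (with the reduced
deconcatenation coproduct) has `d ∘ d = 0` and cohomology `H^k ≅ Sym^k V` for `k ≥ 1`.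

We identify `V ≅ K^N` (choosing a basis `e_1,…,e_N`), so that `Λ = ⋀^{≥1}(K^N)` has
basis `{e_S}` indexed by nonempty subsets `S ⊆ {1,…,N}`, and the reduced shuffle
deconcatenation coproduct is `Δ̄(e_S) = ∑_{S = A ⊔ B, A,B ≠ ∅} ε(A,B) e_A ⊗ e_B`, where
`ε(A,B) = (-1)^{#{(a,b) ∈ A×B | b < a}}` is the shuffle sign.  Hence
`Ω^k = Λ^{⊗k}` has basis indexed by `k`-tuples of nonempty subsets and is realized as
the corresponding function space, with the cobar differential
`d(ω_1⊗⋯⊗ω_k) = ∑_i (-1)^{i-1} ω_1⊗⋯⊗Δ̄(ω_i)⊗⋯⊗ω_k` written in coordinates below.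
`Sym^k V` is realized as the homogeneous polynomials of degree `k`
(`MvPolynomial.homogeneousSubmodule`).
-/

open Finset

/-- Nonempty subsets of the basis of `V ≅ K^N`: the basis of `Λ = ⋀^{≥1} V`. -/
abbrev NESubset (N : ℕ) := {S : Finset (Fin N) // S.Nonempty}

/-- `Ω^k = Λ^{⊗k}` in coordinates w.r.t. its basis of `k`-tuples of nonempty subsets. -/
abbrev CobarTerm (K : Type) [Field K] (N k : ℕ) := (Fin k → NESubset N) → K

/-- The shuffle sign `ε(A,B)`. -/
def shuffleSign (K : Type) [Field K] {N : ℕ} (A B : Finset (Fin N)) : K :=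
  (-1 : K) ^ ((A ×ˢ B).filter (fun p => p.2 < p.1)).card

/-- Merging the `t`-th and `(t+1)`-st entries of a `(k+1)`-tuple of subsets (by union). -/
def cobarMerge {N k : ℕ} (T : Fin (k + 1) → NESubset N) (t : Fin k) :
    Fin k → NESubset N := fun j =>
  if (j : ℕ) < (t : ℕ) then T (Fin.castSucc j)
  else if (j : ℕ) = (t : ℕ) then
    ⟨(T (Fin.castSucc t)).1 ∪ (T t.succ).1,
      (T (Fin.castSucc t)).2.mono Finset.subset_union_left⟩
  else T j.succ

/-- The cobar differential `d : Ω^k → Ω^{k+1}` in coordinates: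
`(d f)(T_1,…,T_{k+1}) = ∑_{t=1}^{k} [T_t ∩ T_{t+1} = ∅] (-1)^{t-1} ε(T_t,T_{t+1})
f(T_1,…,T_t ∪ T_{t+1},…,T_{k+1})`, which is the coordinate form of
`d(ω_1⊗⋯⊗ω_k) = ∑_{i=1}^{k} (-1)^{i-1} ω_1⊗⋯⊗Δ̄(ω_i)⊗⋯⊗ω_k`. -/
noncomputable def cobarD (K : Type) [Field K] (N k : ℕ) :
    CobarTerm K N k →ₗ[K] CobarTerm K N (k + 1) where
  toFun f T := ∑ t : Fin k,
    if Disjoint (T (Fin.castSucc t)).1 (T t.succ).1 then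
      (-1 : K) ^ (t : ℕ) * shuffleSign K (T (Fin.castSucc t)).1 (T t.succ).1
        * f (cobarMerge T t)
    else 0
  map_add' f g := by
    funext T
    rw [Pi.add_apply, ← Finset.sum_add_distrib]
    refine Finset.sum_congr rfl fun t _ => ?_
    split
    · rw [Pi.add_apply]; ring
    · rw [add_zero]
  map_smul' r f := by
    funext T
    simp only [Pi.smul_apply, smul_eq_mul, RingHom.id_apply, Finset.mul_sum]
    refine Finset.sum_congr rfl fun t _ => ?_
    split
    · ring
    · rw [mul_zero]

namespace CobarProof

variable {K : Type} [Field K] {N : ℕ}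

/-! ### The cobar differential on lists -/

/-- The basis vector `e_a`, as a singleton subset. -/
def sg (a : Fin N) : NESubset N := ⟨{a}, Finset.singleton_nonempty a⟩

/-- Union of nonempty subsets. -/
def uni (A B : NESubset N) : NESubset N :=
  ⟨A.1 ∪ B.1, A.2.mono Finset.subset_union_left⟩

/-- The coefficient of `e_A ⊗ e_B` in the reduced coproduct of `e_{A ∪ B}`. -/
def mc (K : Type) [Field K] (A B : NESubset N) : K :=
  if Disjoint A.1 B.1 then shuffleSign K A.1 B.1 else 0

/-- The cobar differential evaluated at a list: `cD L F` is the coordinate of `d F` at `L`, where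
`F` gives the coordinates of a cochain on tuples of all lengths simultaneously. -/
def cD : List (NESubset N) → (List (NESubset N) → K) → K
  | [], _ => 0
  | [_], _ => 0
  | A :: B :: L, F => mc K A B * F (uni A B :: L) - cD (B :: L) (fun U => F (A :: U))

lemma card_sg (a : Fin N) : (sg a).1.card = 1 := Finset.card_singleton a

lemma merge_zero {k : ℕ} (T : Fin (k + 2) → NESubset N) :
    List.ofFn (cobarMerge T 0) = uni (T 0) (T 1) :: List.ofFn (fun i : Fin k => T i.succ.succ) := by
  rw [List.ofFn_succ]
  congr 1

lemma merge_succ {k : ℕ} (T : Fin (k + 2) → NESubset N) (t : Fin k) :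
    List.ofFn (cobarMerge T t.succ) =
      T 0 :: List.ofFn (cobarMerge (fun i : Fin (k + 1) => T i.succ) t) := by
  rw [List.ofFn_succ]
  congr 1
  congr 1
  funext j
  simp only [cobarMerge, Fin.val_succ, Nat.add_lt_add_iff_right, Nat.add_right_cancel_iff]
  rfl

lemma cobarD_ofFn (k : ℕ) (F : List (NESubset N) → K) (T : Fin (k + 1) → NESubset N) :
    cobarD K N k (fun S => F (List.ofFn S)) T = cD (List.ofFn T) F := by
  induction k generalizing F with
  | zero => simp [cobarD, cD, List.ofFn_succ]
  | succ k ih =>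
    have h := ih (fun U => F (T 0 :: U)) (fun i => T i.succ)
    have e : List.ofFn T = T 0 :: T 1 :: List.ofFn (fun i : Fin k => T i.succ.succ) := by
      rw [List.ofFn_succ, List.ofFn_succ]; rfl
    have e' : List.ofFn (fun i : Fin (k + 1) => T i.succ)
        = T 1 :: List.ofFn (fun i : Fin k => T i.succ.succ) := by
      rw [List.ofFn_succ]; rfl
    rw [e, cD, ← e', ← h]
    simp only [cobarD, LinearMap.coe_mk, AddHom.coe_mk]
    rw [Fin.sum_univ_succ, merge_zero, sub_eq_add_neg, ← Finset.sum_neg_distrib]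
    congr 1
    · simp [mc]
    · refine Finset.sum_congr rfl fun t _ => ?_
      rw [merge_succ]
      simp only [Fin.castSucc_succ]
      split
      · simp only [Fin.val_succ, pow_succ]; ring
      · simp

lemma cD_add (L : List (NESubset N)) (F G : List (NESubset N) → K) :
    cD L (F + G) = cD L F + cD L G := by
  induction L generalizing F G with
  | nil => simp [cD]
  | cons A L ih =>
    cases L with
    | nil => simp [cD]
    | cons B L =>
      have := ih (fun U => F (A :: U)) (fun U => G (A :: U))
      simp only [cD, Pi.add_apply]
      rw [show (fun U => F (A :: U) + G (A :: U)) =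
        (fun U => F (A :: U)) + (fun U => G (A :: U)) from rfl, this]
      ring

lemma cD_smul (c : K) (L : List (NESubset N)) (F : List (NESubset N) → K) :
    cD L (c • F) = c * cD L F := by
  induction L generalizing F with
  | nil => simp [cD]
  | cons A L ih =>
    cases L with
    | nil => simp [cD]
    | cons B L =>
      have := ih (fun U => F (A :: U))
      simp only [cD, Pi.smul_apply, smul_eq_mul]
      rw [show (fun U => c * F (A :: U)) = c • (fun U => F (A :: U)) from rfl, this]
      ring

lemma cD_sub (L : List (NESubset N)) (F G : List (NESubset N) → K) :
    cD L (F - G) = cD L F - cD L G := by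
  rw [show F - G = F + (-1 : K) • G by funext; simp [sub_eq_add_neg], cD_add, cD_smul]
  ring

/-- The differential raises length by one. -/
lemma cD_congr (n : ℕ) (L : List (NESubset N)) (hL : L.length = n + 1)
    (F G : List (NESubset N) → K) (h : ∀ U, U.length = n → F U = G U) : cD L F = cD L G := by
  induction L generalizing F G n with
  | nil => simp [cD]
  | cons A L ih =>
    cases L with
    | nil => simp [cD]
    | cons B L =>
      simp only [List.length_cons] at hL
      obtain ⟨n, rfl⟩ : ∃ m, n = m + 1 := ⟨L.length, by omega⟩
      simp only [cD]
      rw [h _ (by simp; omega), ih n (by simp; omega) _ (fun U => G (A :: U))]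
      intro U hU
      exact h _ (by simp [hU])

lemma cD_zero' (L : List (NESubset N)) : cD L (fun _ => (0 : K)) = 0 := by
  simpa only [zero_mul, zero_smul] using! cD_smul (0 : K) L (fun _ => 0)

lemma card_inv_union_left (A B C : Finset (Fin N)) (h : Disjoint A B) :
    (((A ∪ B) ×ˢ C).filter (fun p => p.2 < p.1)).card =
      ((A ×ˢ C).filter (fun p => p.2 < p.1)).card + ((B ×ˢ C).filter (fun p => p.2 < p.1)).card := by
  rw [Finset.union_product, Finset.filter_union, Finset.card_union_of_disjoint]
  exact Finset.disjoint_filter_filter (Finset.disjoint_product.2 (Or.inl h))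

lemma card_inv_union_right (A B C : Finset (Fin N)) (h : Disjoint B C) :
    ((A ×ˢ (B ∪ C)).filter (fun p => p.2 < p.1)).card =
      ((A ×ˢ B).filter (fun p => p.2 < p.1)).card + ((A ×ˢ C).filter (fun p => p.2 < p.1)).card := by
  rw [Finset.product_union, Finset.filter_union, Finset.card_union_of_disjoint]
  exact Finset.disjoint_filter_filter (Finset.disjoint_product.2 (Or.inr h))

/-- Coassociativity of the reduced coproduct. -/
lemma mc_coassoc (A B C : NESubset N) :
    mc K A B * mc K (uni A B) C = mc K B C * mc K A (uni B C) := by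
  simp only [mc, uni, Finset.disjoint_union_left, Finset.disjoint_union_right]
  by_cases h1 : Disjoint A.1 B.1 <;> by_cases h2 : Disjoint A.1 C.1 <;>
    by_cases h3 : Disjoint B.1 C.1 <;> simp [h1, h2, h3]
  simp only [shuffleSign, card_inv_union_left _ _ _ h1, card_inv_union_right _ _ _ h3, pow_add]
  ring

lemma uni_assoc (A B C : NESubset N) : uni (uni A B) C = uni A (uni B C) := by
  simp [uni, Finset.union_assoc]

/-- Left multiplication of the first entry by `A`, dual to splitting `A` off the first entry. -/
def lm (A : NESubset N) (F : List (NESubset N) → K) : List (NESubset N) → K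
  | [] => 0
  | B :: L => mc K A B * F (uni A B :: L)

lemma cD_cons (A : NESubset N) (F : List (NESubset N) → K) :
    (fun L => cD (A :: L) F) = lm A F - fun L => cD L (fun U => F (A :: U)) := by
  funext L
  cases L <;> simp [cD, lm]

lemma cD_cD (L : List (NESubset N)) (F : List (NESubset N) → K) :
    cD L (fun U => cD U F) = 0 := by
  induction L generalizing F with
  | nil => simp [cD]
  | cons A L ih =>
    cases L with
    | nil => simp [cD]
    | cons B L =>
      rw [cD, cD_cons, cD_sub, ih]
      cases L with
      | nil => simp [cD]
      | cons C L =>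
        simp only [cD, lm, uni_assoc]
        have h := cD_smul (mc K A B) (C :: L) (fun U => F (uni A B :: U))
        simp only [Pi.smul_def, smul_eq_mul] at h
        rw [h]
        have := mc_coassoc (K := K) A B C
        linear_combination F (uni A (uni B C) :: L) * this

/-! ### The acyclic matching -/

/-- Every element of `A` precedes every element of `B`. -/
def Below (A B : NESubset N) : Prop := ∀ a ∈ A.1, ∀ b ∈ B.1, a < b

open Classical in
/-- The matching type of a tuple of subsets. At the first position whose entry either is no
singleton, or is a singleton `{a}` with `a` smaller than the whole next entry, the tuple is called
splittable (`some false`) respectively mergeable (`some true`). If there is no such position, the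
tuple is critical (`none`): it is a weakly decreasing sequence of singletons. -/
noncomputable def kind : List (NESubset N) → Option Bool
  | [] => none
  | [A] => if A.1.card = 1 then none else some false
  | A :: B :: L => if A.1.card = 1 then (if Below A B then some true else kind (B :: L))
      else some false

open Classical in
/-- The splittable tuple matched with a mergeable one. -/
noncomputable def fold : List (NESubset N) → List (NESubset N)
  | [] => []
  | [A] => [A]
  | A :: B :: L => if Below A B then uni A B :: L else A :: fold (B :: L)

open Classical in
/-- `A` without its smallest element (and `A` itself if `A` is a singleton). -/
noncomputable def rest (A : NESubset N) : NESubset N :=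
  if h : (A.1.erase (A.1.min' A.2)).Nonempty then ⟨_, h⟩ else A

/-- The mergeable tuple matched with a splittable one. -/
noncomputable def split : List (NESubset N) → List (NESubset N)
  | [] => []
  | A :: L => if A.1.card = 1 then A :: split L else sg (A.1.min' A.2) :: rest A :: L

/-- The multidegree of `e_A`. -/
noncomputable def ind (A : NESubset N) : Fin N →₀ ℕ := ∑ a ∈ A.1, Finsupp.single a 1

/-- The multidegree of a tuple: how often each basis vector of `V` occurs. -/
noncomputable def content : List (NESubset N) → (Fin N →₀ ℕ)
  | [] => 0
  | A :: L => ind A + content L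

/-- The number of inversions between `A` and later entries of total multidegree `c`. -/
def invTo (A : NESubset N) (c : Fin N →₀ ℕ) : ℕ := ∑ a ∈ A.1, ∑ b ∈ Finset.Iio a, c b

/-- The number of inversions of a tuple, i.e. of the word obtained by writing each entry
in increasing order. -/
noncomputable def inv : List (NESubset N) → ℕ
  | [] => 0
  | A :: L => invTo A (content L) + inv L

lemma ind_apply (A : NESubset N) (b : Fin N) : ind A b = if b ∈ A.1 then 1 else 0 := by
  simp [ind, Finsupp.finsetSum_apply, Finsupp.single_apply]

lemma ind_uni (A B : NESubset N) (h : Disjoint A.1 B.1) : ind (uni A B) = ind A + ind B := by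
  simp [ind, uni, Finset.sum_union h]

lemma content_uni (A B : NESubset N) (L : List (NESubset N)) (h : Disjoint A.1 B.1) :
    content (uni A B :: L) = content (A :: B :: L) := by
  simp [content, ind_uni A B h, add_assoc]

lemma invTo_add (A : NESubset N) (c d : Fin N →₀ ℕ) :
    invTo A (c + d) = invTo A c + invTo A d := by
  simp [invTo, Finset.sum_add_distrib]

lemma invTo_uni (A B : NESubset N) (c : Fin N →₀ ℕ) (h : Disjoint A.1 B.1) :
    invTo (uni A B) c = invTo A c + invTo B c := by
  simp [invTo, uni, Finset.sum_union h]

lemma inv_uni (A B : NESubset N) (L : List (NESubset N)) (h : Disjoint A.1 B.1) :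
    inv (A :: B :: L) = inv (uni A B :: L) + invTo A (ind B) := by
  simp only [inv, content, invTo_add, invTo_uni A B _ h]
  ring

lemma Below.disjoint {A B : NESubset N} (h : Below A B) : Disjoint A.1 B.1 :=
  Finset.disjoint_left.2 fun a ha hb => lt_irrefl a (h a ha a hb)

lemma Below.invTo {A B : NESubset N} (h : Below A B) : invTo A (ind B) = 0 := by
  refine Finset.sum_eq_zero fun a ha => Finset.sum_eq_zero fun b hb => ?_
  rw [ind_apply, if_neg]
  intro hB
  exact absurd (h a ha b hB) (not_lt.2 (Finset.mem_Iio.1 hb).le)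

lemma invTo_pos {A B : NESubset N} {a b : Fin N} (ha : a ∈ A.1) (hb : b ∈ B.1) (h : b < a) :
    0 < invTo A (ind B) := by
  refine Finset.sum_pos' (fun _ _ => Nat.zero_le _) ⟨a, ha, ?_⟩
  refine Finset.sum_pos' (fun _ _ => Nat.zero_le _) ⟨b, Finset.mem_Iio.2 h, ?_⟩
  simp [ind_apply, hb]

lemma not_below {A B : NESubset N} (h : ¬ Below A B) : ∃ a ∈ A.1, ∃ b ∈ B.1, b ≤ a := by
  simpa [Below] using h

lemma card_uni_ne (A B : NESubset N) (h : Disjoint A.1 B.1) : (uni A B).1.card ≠ 1 := by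
  have h1 := A.2.card_pos
  have h2 := B.2.card_pos
  simp only [uni, Finset.card_union_of_disjoint h]
  omega

lemma kind_of_card_ne {A : NESubset N} (h : A.1.card ≠ 1) (L : List (NESubset N)) :
    kind (A :: L) = some false := by
  cases L <;> simp [kind, h]

lemma kind_tail {A : NESubset N} (h : A.1.card = 1) (L : List (NESubset N))
    (hk : kind (A :: L) = some false) : kind L = some false := by
  cases L with
  | nil => simp [kind, h] at hk
  | cons B L =>
    by_cases hb : Below A B
    · simp [kind, h, hb] at hk
    · simpa [kind, h, hb] using hk

lemma min_uni (A B : NESubset N) (hA : A.1.card = 1) (h : Below A B) :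
    sg ((uni A B).1.min' (uni A B).2) = A ∧ rest (uni A B) = B := by
  obtain ⟨a, ha⟩ := Finset.card_eq_one.1 hA
  obtain ⟨A, hA'⟩ := A
  simp only at ha
  subst ha
  have hm : (uni ⟨{a}, hA'⟩ B).1.min' (uni ⟨{a}, hA'⟩ B).2 = a := by
    apply le_antisymm
    · exact Finset.min'_le _ _ (by simp [uni])
    · refine Finset.le_min' _ _ _ fun y hy => ?_
      simp only [uni, Finset.mem_union, Finset.mem_singleton] at hy
      rcases hy with rfl | hy
      · exact le_rfl
      · exact (h a (by simp) y hy).le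
  have ha : a ∉ B.1 := fun hb => lt_irrefl a (h a (by simp) a hb)
  have he : (uni ⟨{a}, hA'⟩ B).1.erase a = B.1 := by
    simp only [uni]
    rw [Finset.singleton_union, Finset.erase_insert ha]
  refine ⟨by rw [hm]; rfl, ?_⟩
  unfold rest
  rw [hm, dif_pos (by rw [he]; exact B.2)]
  exact Subtype.ext he

lemma fold_spec (T : List (NESubset N)) (h : kind T = some true) :
    kind (fold T) = some false ∧ inv (fold T) = inv T ∧ content (fold T) = content T ∧
      split (fold T) = T ∧
      ∃ B L B' L', T = B :: L ∧ fold T = B' :: L' ∧ B.1 ⊆ B'.1 := by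
  induction T with
  | nil => simp [kind] at h
  | cons A T ih =>
    cases T with
    | nil => by_cases hA : A.1.card = 1 <;> simp [kind, hA] at h
    | cons B L =>
      by_cases hA : A.1.card = 1
      swap
      · simp [kind, hA] at h
      by_cases hb : Below A B
      · have hu := card_uni_ne A B hb.disjoint
        obtain ⟨h1, h2⟩ := min_uni A B hA hb
        have hf : fold (A :: B :: L) = uni A B :: L := by simp [fold, hb]
        rw [hf]
        refine ⟨kind_of_card_ne hu L, ?_, content_uni A B L hb.disjoint, ?_, A, B :: L, _, _, rfl,
          rfl, Finset.subset_union_left⟩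
        · rw [inv_uni A B L hb.disjoint, hb.invTo, add_zero]
        · simp [split, hu, h1, h2]
      · have hf : fold (A :: B :: L) = A :: fold (B :: L) := by simp [fold, hb]
        rw [hf]
        obtain ⟨i1, i2, i3, i4, B1, L1, B', L', e1, e2, hs⟩ := ih (by simpa [kind, hA, hb] using h)
        obtain ⟨rfl, rfl⟩ := List.cons.inj e1
        refine ⟨?_, ?_, ?_, ?_, A, _, A, _, rfl, rfl, subset_rfl⟩
        · rw [e2] at i1 ⊢
          have : ¬ Below A B' := fun hB => hb fun a ha b hb' => hB a ha b (hs hb')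
          simp [kind, hA, this, i1]
        · simp [inv, i2, i3]
        · simp [content, i3]
        · simp [split, hA, i4]

lemma rest_spec (A : NESubset N) (hA : A.1.card ≠ 1) :
    Below (sg (A.1.min' A.2)) (rest A) ∧ uni (sg (A.1.min' A.2)) (rest A) = A := by
  have hc := A.2.card_pos
  have hm := Finset.min'_mem A.1 A.2
  have hn : (A.1.erase (A.1.min' A.2)).Nonempty := by
    rw [← Finset.card_pos, Finset.card_erase_of_mem hm]; omega
  have hr : rest A = ⟨_, hn⟩ := by unfold rest; rw [dif_pos hn]
  rw [hr]
  constructor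
  · intro a ha b hb
    simp only [sg, Finset.mem_singleton] at ha
    subst ha
    simp only at hb
    exact Finset.min'_lt_of_mem_erase_min' _ _ hb
  · apply Subtype.ext
    simp only [uni, sg, Finset.singleton_union]
    exact Finset.insert_erase hm

lemma split_spec (U : List (NESubset N)) (h : kind U = some false) :
    kind (split U) = some true ∧ inv (split U) = inv U ∧ content (split U) = content U ∧
      fold (split U) = U ∧ (split U).length = U.length + 1 ∧
      ∃ B L B' L', U = B :: L ∧ split U = B' :: L' ∧ ∀ b ∈ B.1, ∃ b' ∈ B'.1, b' ≤ b := by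
  induction U with
  | nil => simp [kind] at h
  | cons A L ih =>
    by_cases hA : A.1.card = 1
    · have hL := kind_tail hA L h
      obtain ⟨i1, i2, i3, i4, i5, B, L1, B', L', rfl, e2, hs⟩ := ih hL
      have hb : ¬ Below A B := by
        intro hb
        simp [kind, hA, hb] at h
      have hb' : ¬ Below A B' := by
        intro hb'
        apply hb
        intro a ha b hbb
        obtain ⟨b', h1, h2⟩ := hs b hbb
        exact (hb' a ha b' h1).trans_le h2
      have hf : split (A :: B :: L1) = A :: split (B :: L1) := by simp [split, hA]
      rw [hf]
      refine ⟨?_, by simp [inv, i2, i3], by simp [content, i3], ?_, by simpa using i5,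
        A, _, A, _, rfl, rfl, fun b hb => ⟨b, hb, le_rfl⟩⟩
      · rw [e2] at i1 ⊢
        simp [kind, hA, hb', i1]
      · rw [e2] at i4 ⊢
        simp [fold, hb', i4]
    · obtain ⟨h1, h2⟩ := rest_spec A hA
      have hf : split (A :: L) = sg (A.1.min' A.2) :: rest A :: L := by simp [split, hA]
      rw [hf]
      refine ⟨?_, ?_, ?_, ?_, by simp, A, L, _, _, rfl, rfl, fun b hb => ⟨A.1.min' A.2, by simp [sg],
        Finset.min'_le _ _ hb⟩⟩
      · simp [kind, h1, card_sg]
      · rw [inv_uni _ _ L h1.disjoint, h1.invTo, h2, add_zero]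
      · rw [← content_uni _ _ L h1.disjoint, h2]
      · simp [fold, h1, h2]

lemma mc_ne_zero {A B : NESubset N} (h : Disjoint A.1 B.1) : mc K A B ≠ 0 := by
  simp [mc, h, shuffleSign]

lemma mc_eq_zero {A B : NESubset N} (h : ¬ Disjoint A.1 B.1) : mc K A B = 0 := by
  simp [mc, h]

/-- The matching is triangular for the differential: on a mergeable tuple `T`, a cochain supported
on splittable tuples has differential a unit times its value at the tuple matched with `T`,
up to its values at tuples with strictly fewer inversions than `T`. -/
lemma triangular (T : List (NESubset N)) (h : kind T = some true) :
    ∃ u : K, u ≠ 0 ∧ ∀ g : List (NESubset N) → K, (∀ U, kind U ≠ some false → g U = 0) →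
      (∀ U, content U = content T → inv U < inv T → g U = 0) → cD T g = u * g (fold T) := by
  induction T with
  | nil => simp [kind] at h
  | cons A T ih =>
    cases T with
    | nil => by_cases hA : A.1.card = 1 <;> simp [kind, hA] at h
    | cons B L =>
      by_cases hA : A.1.card = 1
      swap
      · simp [kind, hA] at h
      by_cases hb : Below A B
      · refine ⟨mc K A B, mc_ne_zero hb.disjoint, fun g hg hlow => ?_⟩
        have hf : fold (A :: B :: L) = uni A B :: L := by simp [fold, hb]
        have hz : ∀ U, g (A :: B :: U) = 0 := fun U => hg _ (by simp [kind, hA, hb])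
        suffices hs : cD (B :: L) (fun U => g (A :: U)) = 0 by rw [cD, hs, hf, sub_zero]
        cases L with
        | nil => simp [cD]
        | cons C L =>
          simp only [cD, hz, cD_zero', sub_zero]
          by_cases hd : Disjoint B.1 C.1
          swap
          · rw [mc_eq_zero hd, zero_mul]
          by_cases hbc : Below A (uni B C)
          · rw [hg _ (by simp [kind, hA, hbc]), mul_zero]
          · obtain ⟨a, ha, c, hc, hca⟩ := not_below hbc
            have hc' : c ∈ C.1 := by
              rcases Finset.mem_union.1 hc with hc | hc
              · exact absurd (hb a ha c hc) (not_lt.2 hca)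
              · exact hc
            obtain ⟨b, hbB⟩ := B.2
            -- `min C ≤ a < min B`, so that merging `B` and `C` removes an inversion
            have hp := invTo_pos hbB hc' (hca.trans_lt (hb a ha b hbB))
            have hcon := content_uni B C L hd
            have hinv := inv_uni B C L hd
            rw [hlow _ (by rw [content, hcon, content.eq_2 A])
              (by rw [inv, hcon, inv.eq_2 A (B :: C :: L)]; omega), mul_zero]
      · have hk : kind (B :: L) = some true := by simpa [kind, hA, hb] using h
        obtain ⟨u, hu, hT⟩ := ih hk
        refine ⟨-u, neg_ne_zero.2 hu, fun g hg hlow => ?_⟩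
        have hf : fold (A :: B :: L) = A :: fold (B :: L) := by simp [fold, hb]
        have h1 : mc K A B * g (uni A B :: L) = 0 := by
          by_cases hd : Disjoint A.1 B.1
          · obtain ⟨a, ha, b, hbB, hba⟩ := not_below hb
            have hne : b ≠ a := fun e => Finset.disjoint_left.1 hd ha (e ▸ hbB)
            have hp := invTo_pos ha hbB (lt_of_le_of_ne hba hne)
            rw [hlow _ (content_uni A B L hd) (by rw [inv_uni A B L hd]; omega), mul_zero]
          · rw [mc_eq_zero hd, zero_mul]
        rw [cD, h1, hT (fun U => g (A :: U)), hf]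
        · ring
        · exact fun U hU => hg _ fun hU' => hU (kind_tail hA U hU')
        · intro U hc hi
          apply hlow
          · rw [content, hc, content.eq_2 A]
          · rw [inv, hc, inv.eq_2 A (B :: L)]; omega

/-- A cochain supported on splittable tuples is determined by its differential on mergeable
tuples. -/
lemma split_injective (g : List (NESubset N) → K) (hg : ∀ U, kind U ≠ some false → g U = 0)
    (hd : ∀ T, kind T = some true → cD T g = 0) : ∀ U, g U = 0 := by
  suffices ∀ n U, inv U = n → g U = 0 from fun U => this _ U rfl
  intro n
  induction n using Nat.strong_induction_on with
  | _ n ih =>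
    intro U hU
    by_cases hk : kind U = some false
    swap
    · exact hg U hk
    obtain ⟨h1, h2, h3, h4, -⟩ := split_spec U hk
    obtain ⟨u, hu, h⟩ := triangular (K := K) _ h1
    have := h g hg fun V _ hV => ih (inv V) (by omega) V rfl
    rw [hd _ h1, h4] at this
    simpa [hu] using this.symm

/-- The differential of a cochain may be prescribed on mergeable tuples with a bounded number
of inversions. -/
lemma merge_surjective (F : List (NESubset N) → K) (n : ℕ) :
    ∃ g : List (NESubset N) → K, ∀ T, kind T = some true → inv T < n → cD T g = F T := by
  classical
  have key : ∀ T : {T : List (NESubset N) // kind T = some true}, ∃ u : K, u ≠ 0 ∧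
      ∀ g : List (NESubset N) → K, (∀ U, kind U ≠ some false → g U = 0) →
      (∀ U, content U = content T.1 → inv U < inv T.1 → g U = 0) →
      cD T.1 g = u * g (fold T.1) := fun T => triangular T.1 T.2
  choose u hu hT using key
  induction n with
  | zero => exact ⟨0, fun T _ h => absurd h (Nat.not_lt_zero _)⟩
  | succ n ih =>
    obtain ⟨g, hg⟩ := ih
    let h : List (NESubset N) → K := fun U =>
      if hU : kind U = some false ∧ inv U = n then
        (u ⟨split U, (split_spec U hU.1).1⟩)⁻¹ * (F (split U) - cD (split U) g) else 0
    refine ⟨g + h, fun T hk hi => ?_⟩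
    have e := hT ⟨T, hk⟩ h (fun U hU => dif_neg fun hh => hU hh.1)
      (fun U _ hU => dif_neg fun hh => by simp only at hU; omega)
    simp only at e
    rw [cD_add, e]
    obtain ⟨f1, f2, f3, f4, -⟩ := fold_spec T hk
    by_cases hn : inv T = n
    · have : h (fold T) = (u ⟨T, hk⟩)⁻¹ * (F T - cD T g) := by
        simp only [h]
        rw [dif_pos ⟨f1, f2.trans hn⟩]
        simp only [f4]
      rw [this, mul_inv_cancel_left₀ (hu _)]
      ring
    · have : h (fold T) = 0 := dif_neg fun hh => hn (f2.symm.trans hh.2)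
      rw [this, hg T hk (by omega)]
      ring

/-! ### Symmetrization -/

/-- Symmetrization `Ω^k → Sym^k V`: the component of a cochain in `V^{⊗k}` is sent to its
image in the polynomial ring. -/
noncomputable def symz (K : Type) [Field K] (N : ℕ) :
    ℕ → ((List (NESubset N) → K) →ₗ[K] MvPolynomial (Fin N) K)
  | 0 => MvPolynomial.monomial 0 ∘ₗ LinearMap.proj []
  | k + 1 => ∑ a : Fin N, LinearMap.mulLeft K (MvPolynomial.X a) ∘ₗ symz K N k ∘ₗ
      LinearMap.funLeft K K (fun U => sg a :: U)

lemma symz_zero (F : List (NESubset N) → K) :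
    symz K N 0 F = MvPolynomial.monomial 0 (F []) := rfl

lemma symz_succ (k : ℕ) (F : List (NESubset N) → K) :
    symz K N (k + 1) F = ∑ a : Fin N, MvPolynomial.X a * symz K N k (fun U => F (sg a :: U)) := by
  simp only [symz, LinearMap.coe_sum, Finset.sum_apply]
  rfl

lemma symz_congr (k : ℕ) (F G : List (NESubset N) → K)
    (h : ∀ U, U.length = k → F U = G U) : symz K N k F = symz K N k G := by
  induction k generalizing F G with
  | zero => rw [symz_zero, symz_zero, h [] rfl]
  | succ k ih =>
    rw [symz_succ, symz_succ]
    refine Finset.sum_congr rfl fun a _ => ?_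
    rw [ih _ (fun U => G (sg a :: U)) fun U hU => h _ (by simp [hU])]

lemma symz_homogeneous (k : ℕ) (F : List (NESubset N) → K) :
    (symz K N k F).IsHomogeneous k := by
  induction k generalizing F with
  | zero => exact MvPolynomial.isHomogeneous_monomial _ (by simp)
  | succ k ih =>
    rw [symz_succ]
    refine MvPolynomial.IsHomogeneous.sum _ _ _ fun a _ => ?_
    rw [add_comm]
    exact (MvPolynomial.isHomogeneous_X K a).mul (ih _)

lemma mc_antisymm (a b : Fin N) : mc K (sg a) (sg b) = - mc K (sg b) (sg a) := by
  rcases lt_trichotomy a b with h | rfl | h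
  · simp [mc, sg, shuffleSign, h, h.ne, h.ne', Finset.filter_singleton, h.not_gt]
  · simp [mc, sg]
  · simp [mc, sg, shuffleSign, h, h.ne, h.ne', Finset.filter_singleton, h.not_gt]

lemma uni_comm (A B : NESubset N) : uni A B = uni B A := by
  simp [uni, Finset.union_comm]

/-- Symmetrization kills coboundaries, since the coproduct of `e_a ∧ e_b` is antisymmetric. -/
lemma symz_cD [CharZero K] (k : ℕ) (F : List (NESubset N) → K) :
    symz K N k (fun U => cD U F) = 0 := by
  induction k generalizing F with
  | zero => simp [symz_zero, cD]
  | succ k ih =>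
    cases k with
    | zero => simp [symz_succ, symz_zero, cD]
    | succ k =>
      have e : ∀ a b : Fin N, (fun U => cD (sg a :: sg b :: U) F) =
          mc K (sg a) (sg b) • (fun U => F (uni (sg a) (sg b) :: U)) -
            fun U => cD (sg b :: U) (fun V => F (sg a :: V)) := by
        intro a b
        funext U
        simp [cD]
      have h2 : ∀ a : Fin N, ∑ b : Fin N, MvPolynomial.X b *
          symz K N k (fun U => cD (sg b :: U) (fun V => F (sg a :: V))) = 0 := by
        intro a
        have := ih (fun V => F (sg a :: V))
        rwa [symz_succ] at this
      set P : Fin N → Fin N → MvPolynomial (Fin N) K := fun a b =>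
        MvPolynomial.X a * (MvPolynomial.X b * (mc K (sg a) (sg b) •
          symz K N k (fun U => F (uni (sg a) (sg b) :: U)))) with hP
      have h1 : symz K N (k + 1 + 1) (fun U => cD U F) = ∑ a, ∑ b, P a b := by
        rw [symz_succ]
        refine Finset.sum_congr rfl fun a _ => ?_
        rw [symz_succ, ← Finset.mul_sum]
        congr 1
        simp only [e, map_sub, map_smul, mul_sub, Finset.sum_sub_distrib, h2, sub_zero]
      have h3 : ∑ a, ∑ b, P a b = - ∑ a, ∑ b, P a b := by
        conv_lhs => rw [Finset.sum_comm]
        rw [← Finset.sum_neg_distrib]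
        refine Finset.sum_congr rfl fun a _ => ?_
        rw [← Finset.sum_neg_distrib]
        refine Finset.sum_congr rfl fun b _ => ?_
        simp only [hP]
        rw [mc_antisymm b a, uni_comm (sg b) (sg a), neg_smul]
        ring
      rw [h1]
      exact self_eq_neg.1 h3

/-! ### Critical tuples -/

lemma kind_none_cons {A : NESubset N} {L : List (NESubset N)} (h : kind (A :: L) = none) :
    A.1.card = 1 ∧ kind L = none ∧ ∀ B L', L = B :: L' → ¬ Below A B := by
  have hA : A.1.card = 1 := by
    by_contra hA
    simp [kind_of_card_ne hA] at h
  refine ⟨hA, ?_⟩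
  cases L with
  | nil => simp [kind]
  | cons B L =>
    have hb : ¬ Below A B := fun hb => by simp [kind, hA, hb] at h
    refine ⟨by simpa [kind, hA, hb] using h, ?_⟩
    intro B' L' e
    obtain ⟨rfl, rfl⟩ := List.cons.inj e
    exact hb

lemma exists_sg {A : NESubset N} (h : A.1.card = 1) : ∃ a, A = sg a := by
  obtain ⟨a, ha⟩ := Finset.card_eq_one.1 h
  exact ⟨a, Subtype.ext ha⟩

lemma content_sg (a : Fin N) (L : List (NESubset N)) :
    content (sg a :: L) = Finsupp.single a 1 + content L := by
  simp [content, ind, sg]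

/-- All entries of a critical tuple are at most the first one. -/
lemma critical_le (L : List (NESubset N)) (a b : Fin N) (h : kind (sg a :: L) = none)
    (hb : content L b ≠ 0) : b ≤ a := by
  induction L generalizing a with
  | nil => simp [content] at hb
  | cons B L ih =>
    obtain ⟨-, h2, h3⟩ := kind_none_cons h
    obtain ⟨c, rfl⟩ := exists_sg (kind_none_cons h2).1
    have hca : c ≤ a := by simpa [Below, sg] using h3 _ _ rfl
    rw [content_sg] at hb
    by_cases hbc : b = c
    · exact hbc ▸ hca
    · have : content L b ≠ 0 := by
        simpa [Finsupp.single_apply, Ne.symm hbc] using hb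
      exact (ih c h2 this).trans hca

/-- A cochain supported on tuples of singletons is a cocycle. -/
lemma cD_singletons (L : List (NESubset N)) (F : List (NESubset N) → K)
    (h : ∀ U, (∃ A ∈ U, A.1.card ≠ 1) → F U = 0) : cD L F = 0 := by
  induction L generalizing F with
  | nil => simp [cD]
  | cons A L ih =>
    cases L with
    | nil => simp [cD]
    | cons B L =>
      rw [cD, ih (fun U => F (A :: U)), sub_zero]
      · by_cases hd : Disjoint A.1 B.1
        · rw [h _ ⟨uni A B, by simp, card_uni_ne A B hd⟩, mul_zero]
        · rw [mc_eq_zero hd, zero_mul]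
      · rintro U ⟨C, hC, hC'⟩
        exact h _ ⟨C, by simp [hC], hC'⟩

lemma kind_none_card (L : List (NESubset N)) (h : kind L = none) : ∀ A ∈ L, A.1.card = 1 := by
  induction L with
  | nil => simp
  | cons A L ih =>
    obtain ⟨h1, h2, -⟩ := kind_none_cons h
    simpa [h1] using fun B hB hB' => ih h2 ⟨B, hB⟩ hB'

lemma coeff_symz_eq_zero (k : ℕ) (b : Fin N) (F : List (NESubset N) → K)
    (h : ∀ U, content U b ≠ 0 → F U = 0) (β : Fin N →₀ ℕ) (hβ : β b ≠ 0) :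
    (symz K N k F).coeff β = 0 := by
  induction k generalizing F β with
  | zero =>
    rw [symz_zero, MvPolynomial.coeff_monomial, if_neg]
    rintro rfl
    simp at hβ
  | succ k ih =>
    rw [symz_succ, MvPolynomial.coeff_sum]
    refine Finset.sum_eq_zero fun a _ => ?_
    rw [MvPolynomial.coeff_X_mul']
    split
    · by_cases hab : a = b
      · subst hab
        rw [show (fun U => F (sg a :: U)) = 0 from
          funext fun U => h _ (by simp [content_sg]), map_zero, MvPolynomial.coeff_zero]
      · refine ih _ (fun U hU => h _ ?_) _ ?_
        · simp [content_sg, hU]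
        · simpa [Finsupp.single_apply, hab] using hβ
    · rfl

/-- Symmetrization identifies the cochains supported on critical tuples with polynomials. -/
lemma coeff_symz (k : ℕ) (F : List (NESubset N) → K) (hF : ∀ U, kind U ≠ none → F U = 0)
    (L : List (NESubset N)) (hk : kind L = none) (hL : L.length = k) :
    (symz K N k F).coeff (content L) = F L := by
  induction k generalizing F L with
  | zero =>
    obtain rfl := List.length_eq_zero_iff.1 hL
    simp [symz_zero, content]
  | succ k ih =>
    obtain ⟨A, L, rfl⟩ := List.exists_cons_of_length_eq_add_one hL
    obtain ⟨h1, h2, h3⟩ := kind_none_cons hk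
    obtain ⟨b, rfl⟩ := exists_sg h1
    rw [symz_succ, MvPolynomial.coeff_sum, Finset.sum_eq_single b]
    · rw [content_sg, MvPolynomial.coeff_X_mul]
      refine ih (fun U => F (sg b :: U)) (fun U hU => hF _ fun h => hU (kind_none_cons h).2.1) L h2
        (by simpa using hL)
    · intro a _ hab
      rw [MvPolynomial.coeff_X_mul']
      split_ifs with ha
      · have hab' : a < b := by
          refine lt_of_le_of_ne (critical_le L b a hk ?_) hab
          simpa [content_sg, Finsupp.single_apply, Ne.symm hab] using ha
        refine coeff_symz_eq_zero k b _ (fun U hU => hF _ fun h => ?_) _ ?_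
        · exact absurd (critical_le U a b h hU) (not_le.2 hab')
        · simp [content_sg, hab]
      · rfl
    · simp

lemma exists_critical (k : ℕ) (α : Fin N →₀ ℕ) (h : α.degree = k) :
    ∃ L : List (NESubset N), kind L = none ∧ L.length = k ∧ content L = α := by
  induction k generalizing α with
  | zero =>
    rw [Finsupp.degree_eq_zero_iff] at h
    exact ⟨[], by simp [kind], rfl, by simp [content, h]⟩
  | succ k ih =>
    have hne : α.support.Nonempty := by
      rw [Finset.nonempty_iff_ne_empty, Ne, Finsupp.support_eq_empty]
      rintro rfl
      simp at h
    set b := α.support.max' hne with hb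
    have hbm : α b ≠ 0 := Finsupp.mem_support_iff.1 (Finset.max'_mem _ hne)
    have hα : Finsupp.single b 1 + (α - Finsupp.single b 1) = α := by
      apply add_tsub_cancel_of_le
      rw [Finsupp.single_le_iff]
      omega
    have hdeg : (α - Finsupp.single b 1).degree = k := by
      have := congrArg Finsupp.degree hα
      rw [map_add, Finsupp.degree_single, h] at this
      omega
    obtain ⟨L, h1, h2, h3⟩ := ih _ hdeg
    refine ⟨sg b :: L, ?_, by simp [h2], by rw [content_sg, h3, hα]⟩
    cases L with
    | nil => simp [kind, sg]
    | cons B L =>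
      have hB : ¬ Below (sg b) B := by
        intro hB
        obtain ⟨c, hc⟩ := B.2
        have h4 : c ≤ b := by
          apply Finset.le_max'
          rw [Finsupp.mem_support_iff, ← hα, ← h3]
          simp [content, ind_apply, hc]
        exact absurd (hB b (by simp [sg]) c hc) (not_lt.2 h4)
      simp [kind, hB, h1, card_sg]

/-! ### Cohomology -/

/-- A cocycle with trivial symmetrization is a coboundary. -/
lemma exact_of_symz [CharZero K] (k : ℕ) (F : List (NESubset N) → K)
    (hd : ∀ T, T.length = k + 1 → cD T F = 0) (hs : symz K N k F = 0) :
    ∃ g : List (NESubset N) → K, ∀ T, T.length = k → F T = cD T g := by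
  classical
  obtain ⟨n, hn⟩ : ∃ n, ∀ T : List (NESubset N), T.length = k → inv T < n := by
    obtain ⟨n, hn⟩ := ((List.finite_length_eq (NESubset N) k).image inv).bddAbove
    exact ⟨n + 1, fun T hT => Nat.lt_succ_of_le (hn ⟨T, hT, rfl⟩)⟩
  obtain ⟨g, hg⟩ := merge_surjective F n
  set F1 : List (NESubset N) → K := F - fun U => cD U g with hF1
  have hm : ∀ T, T.length = k → kind T = some true → F1 T = 0 := fun T hT hk => by
    simp [hF1, hg T hk (hn T hT)]
  have hd1 : ∀ T, T.length = k + 1 → cD T F1 = 0 := fun T hT => by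
    rw [hF1, cD_sub, hd T hT, cD_cD, sub_zero]
  -- the critical and the splittable part of `F1`
  let c : List (NESubset N) → K := fun U => if U.length = k ∧ kind U = none then F1 U else 0
  let e : List (NESubset N) → K := fun U => if U.length = k ∧ kind U = some false then F1 U else 0
  have hce : ∀ U, U.length = k → F1 U = (c + e) U := by
    intro U hU
    rcases hk : kind U with _ | _ | _
    · simp [c, e, hU, hk]
    · simp [c, e, hU, hk]
    · simp [c, e, hU, hk, hm U hU hk]
  have hc0 : ∀ T, cD T c = 0 := by
    intro T
    apply cD_singletons
    rintro U ⟨A, hA, hA'⟩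
    exact if_neg fun h => hA' (kind_none_card U h.2 A hA)
  have he0 : ∀ U, e U = 0 := by
    apply split_injective
    · exact fun U hU => if_neg fun h => hU h.2
    · intro T hT
      by_cases hl : T.length = k + 1
      · have := hd1 T hl
        rw [cD_congr k T hl F1 (c + e) hce, cD_add, hc0, zero_add] at this
        exact this
      · rcases T with _ | ⟨A, T⟩
        · simp [cD]
        · rw [cD_congr T.length (A :: T) (by simp) e (fun _ => 0), cD_zero']
          intro U hU
          refine if_neg fun h => hl ?_
          simp; omega
  have hcs : symz K N k c = 0 := by
    rw [symz_congr k c F1 fun U hU => by rw [hce U hU, Pi.add_apply, he0, add_zero], hF1, map_sub,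
      hs, symz_cD, sub_zero]
  refine ⟨g, fun T hT => ?_⟩
  have hcT : c T = 0 := by
    by_cases hk : kind T = none
    · rw [← coeff_symz k c (fun U hU => if_neg fun h => hU h.2) T hk hT, hcs,
        MvPolynomial.coeff_zero]
    · exact if_neg fun h => hk h.2
  have := hce T hT
  rw [Pi.add_apply, hcT, he0, add_zero, hF1, Pi.sub_apply] at this
  exact sub_eq_zero.1 this

/-- Every homogeneous polynomial is the symmetrization of a cocycle. -/
lemma symz_surj (k : ℕ) (p : MvPolynomial (Fin N) K) (hp : p.IsHomogeneous k) :
    ∃ F : List (NESubset N) → K, (∀ T, cD T F = 0) ∧ symz K N k F = p := by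
  classical
  let F : List (NESubset N) → K := fun U => if kind U = none then p.coeff (content U) else 0
  refine ⟨F, fun T => ?_, ?_⟩
  · apply cD_singletons
    rintro U ⟨A, hA, hA'⟩
    exact if_neg fun h => hA' (kind_none_card U h A hA)
  · ext α
    by_cases hα : α.degree = k
    · obtain ⟨L, h1, h2, rfl⟩ := exists_critical k α hα
      rw [coeff_symz k F (fun U hU => if_neg hU) L h1 h2]
      exact if_pos h1
    · rw [(symz_homogeneous k F).coeff_eq_zero hα, hp.coeff_eq_zero hα]

/-- Extension by zero of a cochain to tuples of all lengths. -/
def extZero (K : Type) [Field K] (N k : ℕ) : CobarTerm K N k →ₗ[K] (List (NESubset N) → K) where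
  toFun f L := if h : L.length = k then f (fun i => L.get (i.cast h.symm)) else 0
  map_add' f g := by
    funext L
    by_cases h : L.length = k <;> simp [h]
  map_smul' c f := by
    funext L
    by_cases h : L.length = k <;> simp [h]

lemma extZero_ofFn {k : ℕ} (f : CobarTerm K N k) (T : Fin k → NESubset N) :
    extZero K N k f (List.ofFn T) = f T := by
  simp [extZero]

lemma cobarD_eq {k : ℕ} (f : CobarTerm K N k) (T : Fin (k + 1) → NESubset N) :
    cobarD K N k f T = cD (List.ofFn T) (extZero K N k f) := by
  rw [← cobarD_ofFn]
  simp only [extZero_ofFn]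

lemma exists_ofFn {k : ℕ} (L : List (NESubset N)) (h : L.length = k) :
    ∃ T : Fin k → NESubset N, L = List.ofFn T := by
  subst h
  exact ⟨L.get, (List.ofFn_get L).symm⟩

lemma extZero_cobarD {k : ℕ} (f : CobarTerm K N k) (L : List (NESubset N)) (h : L.length = k + 1) :
    extZero K N (k + 1) (cobarD K N k f) L = cD L (extZero K N k f) := by
  obtain ⟨T, rfl⟩ := exists_ofFn L h
  rw [extZero_ofFn, cobarD_eq]

lemma cobarD_comp (k : ℕ) : (cobarD K N (k + 1)).comp (cobarD K N k) = 0 := by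
  refine LinearMap.ext fun f => funext fun T => ?_
  rw [LinearMap.comp_apply, cobarD_eq, cD_congr (k + 1) _ (by simp) _ _ (extZero_cobarD f), cD_cD]
  rfl

/-- Symmetrization of cocycles. -/
noncomputable def symKer (K : Type) [Field K] (N k : ℕ) :
    LinearMap.ker (cobarD K N k) →ₗ[K] MvPolynomial.homogeneousSubmodule (Fin N) K k :=
  LinearMap.codRestrict _ (symz K N k ∘ₗ extZero K N k ∘ₗ (LinearMap.ker (cobarD K N k)).subtype)
    fun _ => symz_homogeneous k _

lemma symKer_surjective (k : ℕ) : Function.Surjective (symKer K N k) := by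
  rintro ⟨p, hp⟩
  obtain ⟨F, h1, h2⟩ := symz_surj k p hp
  refine ⟨⟨fun T => F (List.ofFn T), ?_⟩, Subtype.ext ?_⟩
  · rw [LinearMap.mem_ker]
    funext T
    rw [cobarD_ofFn, h1]
    rfl
  · change symz K N k (extZero K N k fun T => F (List.ofFn T)) = p
    rw [← h2]
    refine symz_congr k _ _ fun U hU => ?_
    obtain ⟨T, rfl⟩ := exists_ofFn U hU
    rw [extZero_ofFn]

lemma ker_symKer [CharZero K] (k : ℕ) : LinearMap.ker (symKer K N (k + 1)) =
    Submodule.comap (LinearMap.ker (cobarD K N (k + 1))).subtype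
      (LinearMap.range (cobarD K N k)) := by
  ext ⟨f, hf⟩
  rw [LinearMap.mem_ker, Submodule.mem_comap, LinearMap.mem_range, Submodule.subtype_apply,
    ← Subtype.coe_inj]
  change symz K N (k + 1) (extZero K N (k + 1) f) = 0 ↔ _
  constructor
  · intro h
    obtain ⟨g, hg⟩ := exact_of_symz (k + 1) (extZero K N (k + 1) f) (fun T hT => by
      rw [← extZero_cobarD f T hT, LinearMap.mem_ker.1 hf, map_zero]; rfl) h
    refine ⟨fun T => g (List.ofFn T), ?_⟩
    funext T
    rw [cobarD_ofFn, ← hg _ (by simp), extZero_ofFn]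
  · rintro ⟨g, rfl⟩
    rw [symz_congr (k + 1) _ _ (extZero_cobarD g), symz_cD]

end CobarProof

/-- STATEMENT 4: `d ∘ d = 0` and, for every `k = j+1 ≥ 1`,
`H^k = ker(d : Ω^k → Ω^{k+1}) / im(d : Ω^{k-1} → Ω^k) ≅ Sym^k V`. -/
theorem cobar_complex_cohomology (K : Type) [Field K] [CharZero K] (N : ℕ) :
    (∀ k : ℕ, (cobarD K N (k + 1)).comp (cobarD K N k) = 0) ∧
    (∀ j : ℕ, Nonempty (
      (↥(LinearMap.ker (cobarD K N (j + 1))) ⧸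
        Submodule.comap (LinearMap.ker (cobarD K N (j + 1))).subtype
          (LinearMap.range (cobarD K N j)))
      ≃ₗ[K] ↥(MvPolynomial.homogeneousSubmodule (Fin N) K (j + 1)))) := by
  refine ⟨fun k => CobarProof.cobarD_comp k, fun j => ⟨?_⟩⟩
  exact (Submodule.quotEquivOfEq _ _ (CobarProof.ker_symKer j).symm).trans
    ((CobarProof.symKer K N (j + 1)).quotKerEquivOfSurjective (CobarProof.symKer_surjective (j + 1)))
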